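/- The operators e_i' on U_q^-(g) satisfy the q-Serre relations: for i≠j, Σ_{k=0}^{b}(−1)^k (e_i')^{(k)} ∘ e_j' ∘ (e_i')^{(b−k)} = 0 as K-linear endomorphisms of U_q^-(g), where b=1−(α_i^∨,α_j) and (e_i')^{(k)} = (e_i')^k/[k]_i!. -/

import Mathlib

noncomputable section
open scoped BigOperators

abbrev KK : Type := RatFunc ℚ

def qq : KK := RatFunc.X

def qZ (n : ℤ) : KK := qq ^ n

def qInt (d : ℤ) (k : ℕ) : KK := (qq ^ (d * k) - qq ^ (-(d * k : ℤ))) / (qq ^ d - qq ^ (-d : ℤ))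

def qFact (d : ℤ) (k : ℕ) : KK := ∏ m ∈ Finset.range k, qInt d (m + 1)

variable {I : Type} [DecidableEq I]

/-- `b = 1 - (α_i^∨, α_j)` -/
def serreN (A : I → I → ℤ) (i j : I) : ℕ := (1 - 2 * A i j / A i i).toNat

def fSerre (A : I → I → ℤ) (i j : I) : FreeAlgebra KK I :=
  ∑ k ∈ Finset.range (serreN A i j + 1),
    ((-1 : KK) ^ k * (qFact (A i i / 2) k)⁻¹ * (qFact (A i i / 2) (serreN A i j - k))⁻¹) •
      ((FreeAlgebra.ι KK i) ^ k * FreeAlgebra.ι KK j * (FreeAlgebra.ι KK i) ^ (serreN A i j - k))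

inductive SerreRel (A : I → I → ℤ) : FreeAlgebra KK I → FreeAlgebra KK I → Prop
  | serre (i j : I) (h : i ≠ j) : SerreRel A (fSerre A i j) 0

abbrev Um (A : I → I → ℤ) : Type := RingQuot (SerreRel A)

def fgen (A : I → I → ℤ) (i : I) : Um A := RingQuot.mkAlgHom KK (SerreRel A) (FreeAlgebra.ι KK i)

def IsWt (A : I → I → ℤ) (ν : I →₀ ℕ) (a : Um A) : Prop :=
  a ∈ Submodule.span KK {x | ∃ L : List I, (∀ i, L.count i = ν i) ∧ x = (L.map (fgen A)).prod}

def IsCartan (A : I → I → ℤ) : Prop :=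
  (∀ i j, A i j = A j i) ∧ (∀ i, 0 < A i i) ∧ (∀ i, 2 ∣ A i i) ∧
  (∀ i j, i ≠ j → A i j ≤ 0) ∧ (∀ i j, A i i ∣ 2 * A i j)

def EprimRel (A : I → I → ℤ) (E : I → Module.End KK (Um A)) : Prop :=
  (∀ i, E i 1 = 0) ∧
  ∀ i j (a : Um A), E i (fgen A j * a) =
    (if i = j then a else 0) + qZ (-(A i j)) • (fgen A j * (E i a))

/-!
Write `S` for the Serre combination of `e_i'` and `e_j'`. Since `S` kills `1` and the `f_l` generate
`U_q^-(g)`, it is enough that for every `l` the operator `S` commutes, up to a scalar, with left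
multiplication by `f_l`. By the `q`-binomial theorem `S` is, up to a `q`-factorial, the iterated
`q`-commutator of `e_j'` with `e_i'`, whose `m`-th bracket, `1 ≤ m ≤ b`, has parameter
`q_i^{b+1-2m}`. Scalar commutation passes through `q`-commutators, so only `l = j` and `l = i` need
an argument. For `l = j` the first bracket already cancels the inhomogeneous terms. For `l = i` the
`m`-th bracket leaves an error term proportional to the preceding bracket, and for `m = b` its
coefficient vanishes because `c_ij c_ji c_ii^{b-1} = 1`, where `c_kl = q^{-(α_k,α_l)}`.
-/

section QCommutator

open Finset

variable {K R : Type*} [CommRing K] [Ring R] [Algebra K R]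

variable (K) in
/-- Elements `a` and `b` quasi-commute if they commute up to a scalar. The scalar stands next to
`b * a` and may be zero, so the relation is not symmetric. -/
def QuasiCommute (a b : R) : Prop :=
  ∃ c : K, a * b = c • (b * a)

/-- The `q`-commutator `[a, b]_c = ab - c ba`. -/
def qCommutator (c : K) (a b : R) : R :=
  a * b - c • (b * a)

/-- The iterated `q`-commutator `[⋯[[g, a]_x, a]_{xt}, ⋯, a]_{xt^{m-1}}` with `m` brackets, the
factorised form of a quantum Serre element. -/
def iterQCommutator (x t : K) (a g : R) : ℕ → R
  | 0 => g
  | m + 1 => qCommutator (x * t ^ m) (iterQCommutator x t a g m) a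

lemma mul_mul_eq_smul_of_mul_eq_smul {a b z : R} {α β : K} (ha : a * z = α • (z * a))
    (hb : b * z = β • (z * b)) : a * b * z = (α * β) • (z * (a * b)) := by
  rw [mul_assoc, hb, mul_smul_comm, ← mul_assoc, ha, smul_mul_assoc, smul_smul, mul_comm β,
    mul_assoc]

lemma QuasiCommute.qCommutator_left {a b z : R} (ha : QuasiCommute K a z)
    (hb : QuasiCommute K b z) (c : K) : QuasiCommute K (qCommutator c a b) z := by
  obtain ⟨α, ha⟩ := ha
  obtain ⟨β, hb⟩ := hb
  refine ⟨α * β, ?_⟩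
  rw [qCommutator, sub_mul, smul_mul_assoc, mul_mul_eq_smul_of_mul_eq_smul ha hb,
    mul_mul_eq_smul_of_mul_eq_smul hb ha, mul_sub, mul_smul_comm]
  module

lemma QuasiCommute.iterQCommutator_left {a g z : R} {x t : K} (ha : QuasiCommute K a z) {k m : ℕ}
    (hkm : k ≤ m) (hk : QuasiCommute K (iterQCommutator x t a g k) z) :
    QuasiCommute K (iterQCommutator x t a g m) z := by
  induction m, hkm using Nat.le_induction with
  | base => exact hk
  | succ m _ ih => exact ih.qCommutator_left ha _

lemma quasiCommute_qCommutator_of_mul_eq_one_add {a g z : R} {x y : K} (ha : a * z = x • (z * a))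
    (hg : g * z = 1 + y • (z * g)) : QuasiCommute K (qCommutator x g a) z := by
  have hga : g * a * z = x • a + (x * y) • (z * (g * a)) := by
    rw [mul_assoc, ha, mul_smul_comm, ← mul_assoc, hg, add_mul, one_mul, smul_mul_assoc, smul_add,
      smul_smul, mul_assoc]
  have hag : a * g * z = a + (x * y) • (z * (a * g)) := by
    rw [mul_assoc, hg, mul_add, mul_one, mul_smul_comm, ← mul_assoc, ha, smul_mul_assoc, smul_smul,
      mul_comm y, mul_assoc]
  refine ⟨x * y, ?_⟩
  rw [qCommutator, sub_mul, smul_mul_assoc, hga, hag, mul_sub, mul_smul_comm]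
  module

lemma qCommutator_mul_of_mul_eq_one_add {a z s s' : R} {t α β : K} (ha : a * z = 1 + t • (z * a))
    (hs : s * z = α • (z * s) + β • s') (c : K) :
    qCommutator c s a * z = (α * t) • (z * qCommutator c s a) + (1 - c * α) • s +
      β • (t • (s' * a) - c • (a * s')) := by
  have hsa : s * a * z = s + (t * α) • (z * (s * a)) + (t * β) • (s' * a) := by
    rw [mul_assoc, ha, mul_add, mul_one, mul_smul_comm, ← mul_assoc, hs, add_mul, smul_mul_assoc,
      smul_mul_assoc, mul_assoc]
    module
  have has : a * s * z = α • s + (α * t) • (z * (a * s)) + β • (a * s') := by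
    rw [mul_assoc, hs, mul_add, mul_smul_comm, mul_smul_comm, ← mul_assoc, ha, add_mul, one_mul,
      smul_mul_assoc, mul_assoc]
    module
  simp only [qCommutator, sub_mul, smul_mul_assoc, hsa, has, mul_sub, mul_smul_comm]
  module

lemma iterQCommutator_succ_mul {a g z : R} {x y t : K} (ha : a * z = 1 + t • (z * a))
    (hg : g * z = y • (z * g)) (m : ℕ) :
    iterQCommutator x t a g (m + 1) * z =
      (y * t ^ (m + 1)) • (z * iterQCommutator x t a g (m + 1)) +
        (∑ p ∈ antidiagonal m, t ^ p.1 * (1 - x * y * t ^ (2 * p.2))) •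
          iterQCommutator x t a g m := by
  induction m with
  | zero =>
    have hg' : g * z = y • (z * g) + (0 : K) • 0 := by rw [hg, smul_zero, add_zero]
    simpa [iterQCommutator] using qCommutator_mul_of_mul_eq_one_add ha hg' x
  | succ m ih =>
    have hbracket : t • (iterQCommutator x t a g m * a) -
        (x * t ^ (m + 1)) • (a * iterQCommutator x t a g m) =
          t • iterQCommutator x t a g (m + 1) := by
      rw [iterQCommutator, qCommutator]
      module
    rw [iterQCommutator, qCommutator_mul_of_mul_eq_one_add ha ih, hbracket, ← iterQCommutator,
      Nat.sum_antidiagonal_succ]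
    have hcoeff : ∑ p ∈ antidiagonal m, t ^ (p.1 + 1) * (1 - x * y * t ^ (2 * p.2)) =
        t * ∑ p ∈ antidiagonal m, t ^ p.1 * (1 - x * y * t ^ (2 * p.2)) := by
      rw [mul_sum]
      exact sum_congr rfl fun p _ ↦ by ring
    rw [hcoeff]
    module

lemma sum_antidiagonal_pow_mul_one_sub {t u : K} {n : ℕ} (h : u * t ^ n = 1) :
    ∑ p ∈ antidiagonal n, t ^ p.1 * (1 - u * t ^ (2 * p.2)) = 0 := by
  have hterm : ∀ p ∈ antidiagonal n, t ^ p.1 * (1 - u * t ^ (2 * p.2)) = t ^ p.1 - t ^ p.2 := by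
    rintro ⟨k, l⟩ hp
    rw [← mem_antidiagonal.mp hp] at h
    linear_combination (-t ^ l) * h
  rw [sum_congr rfl hterm, sum_sub_distrib, sub_eq_zero]
  exact (Nat.sum_antidiagonal_swap (f := fun p ↦ t ^ p.1)).symm

lemma quasiCommute_iterQCommutator_of_mul_eq_one_add {a g z : R} {x y t : K} {n : ℕ}
    (ha : a * z = 1 + t • (z * a)) (hg : g * z = y • (z * g)) (h : x * y * t ^ n = 1) :
    QuasiCommute K (iterQCommutator x t a g (n + 1)) z :=
  ⟨y * t ^ (n + 1), by
    rw [iterQCommutator_succ_mul ha hg, sum_antidiagonal_pow_mul_one_sub h, zero_smul, add_zero]⟩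

end QCommutator

section SkewDerivation

variable {K U ι : Type*} [CommRing K] [Ring U] [Algebra K U]

/-- Kashiwara's operators `e_i'` on an algebra with distinguished elements `f_i`, where the scalars
`q^{-(α_i,α_j)}` are replaced by an arbitrary matrix `c`. -/
structure IsSkewDerivationFamily [DecidableEq ι] (c : ι → ι → K) (f : ι → U)
    (E : ι → Module.End K U) : Prop where
  map_one : ∀ i, E i 1 = 0
  map_gen_mul : ∀ i j a, E i (f j * a) = (if i = j then a else 0) + c i j • (f j * E i a)

lemma end_eq_zero_of_quasiCommute_mulLeft {f : ι → U} (hf : Algebra.adjoin K (Set.range f) = ⊤)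
    {S : Module.End K U} (hS : S 1 = 0)
    (hcomm : ∀ l, QuasiCommute K S (LinearMap.mulLeft K (f l))) : S = 0 := by
  have hker : ∀ x ∈ Algebra.adjoin K (Set.range f), ∀ a, S a = 0 → S (x * a) = 0 := by
    intro x hx
    induction hx using Algebra.adjoin_induction with
    | mem x hx =>
      obtain ⟨l, rfl⟩ := hx
      intro a ha
      obtain ⟨c, hc⟩ := hcomm l
      simpa [ha] using LinearMap.congr_fun hc a
    | algebraMap r =>
      intro a ha
      rw [← Algebra.smul_def, map_smul, ha, smul_zero]
    | add x y _ _ hx hy =>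
      intro a ha
      rw [add_mul, map_add, hx a ha, hy a ha, add_zero]
    | mul x y _ _ hx hy =>
      intro a ha
      rw [mul_assoc]
      exact hx _ (hy a ha)
  ext a
  simpa using hker a (hf ▸ Algebra.mem_top) 1 hS

lemma iterQCommutator_apply_eq_zero {a g : Module.End K U} {u : U} (ha : a u = 0) (hg : g u = 0)
    (x t : K) (m : ℕ) : iterQCommutator x t a g m u = 0 := by
  induction m with
  | zero => exact hg
  | succ m ih => simp [iterQCommutator, qCommutator, ha, ih]

namespace IsSkewDerivationFamily

variable [DecidableEq ι] {c : ι → ι → K} {f : ι → U} {E : ι → Module.End K U}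

lemma mul_mulLeft_self (hE : IsSkewDerivationFamily c f E) (i : ι) :
    E i * LinearMap.mulLeft K (f i) = 1 + c i i • (LinearMap.mulLeft K (f i) * E i) := by
  ext a
  simp [hE.map_gen_mul]

lemma mul_mulLeft_of_ne (hE : IsSkewDerivationFamily c f E) {i j : ι} (hij : i ≠ j) :
    E i * LinearMap.mulLeft K (f j) = c i j • (LinearMap.mulLeft K (f j) * E i) := by
  ext a
  simp [hE.map_gen_mul, hij]

theorem iterQCommutator_eq_zero (hE : IsSkewDerivationFamily c f E)
    (hf : Algebra.adjoin K (Set.range f) = ⊤) {i j : ι} (hij : i ≠ j) {n : ℕ}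
    (hc : c i j * c j i * c i i ^ n = 1) :
    iterQCommutator (c i j) (c i i) (E i) (E j) (n + 1) = 0 := by
  refine end_eq_zero_of_quasiCommute_mulLeft hf
    (iterQCommutator_apply_eq_zero (hE.map_one i) (hE.map_one j) _ _ _) fun l ↦ ?_
  obtain rfl | hil := eq_or_ne i l
  · exact quasiCommute_iterQCommutator_of_mul_eq_one_add (hE.mul_mulLeft_self i)
      (hE.mul_mulLeft_of_ne hij.symm) hc
  have hi : QuasiCommute K (E i) (LinearMap.mulLeft K (f l)) := ⟨_, hE.mul_mulLeft_of_ne hil⟩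
  obtain rfl | hjl := eq_or_ne j l
  · have hone : QuasiCommute K (iterQCommutator (c i j) (c i i) (E i) (E j) 1)
        (LinearMap.mulLeft K (f j)) := by
      rw [iterQCommutator, iterQCommutator, pow_zero, mul_one]
      exact quasiCommute_qCommutator_of_mul_eq_one_add (hE.mul_mulLeft_of_ne hij)
        (hE.mul_mulLeft_self j)
    exact hi.iterQCommutator_left (Nat.le_add_left 1 n) hone
  · have hj : QuasiCommute K (E j) (LinearMap.mulLeft K (f l)) := ⟨_, hE.mul_mulLeft_of_ne hjl⟩
    exact hi.iterQCommutator_left (Nat.zero_le _) hj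

end IsSkewDerivationFamily

end SkewDerivation

section QBinomial

open Finset

variable {K : Type*} [Field K]

/-- The quantum integer `[k]_v = (v^k - v^{-k}) / (v - v^{-1})`, written as a geometric sum so that
`v = ±1` needs no separate treatment. -/
def qInteger (v : K) (k : ℕ) : K :=
  ∑ m ∈ range k, v ^ m * v⁻¹ ^ (k - 1 - m)

/-- The quantum factorial `[k]_v! = [1]_v ⋯ [k]_v`. -/
def qFactorial (v : K) (k : ℕ) : K :=
  ∏ m ∈ range k, qInteger v (m + 1)

lemma qInteger_zero (v : K) : qInteger v 0 = 0 := by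
  simp [qInteger]

lemma qInteger_add (v : K) (k l : ℕ) :
    qInteger v (k + l) = v⁻¹ ^ l * qInteger v k + v ^ k * qInteger v l := by
  simp only [qInteger, sum_range_add, mul_sum]
  congr 1 <;> refine sum_congr rfl fun m hm ↦ ?_
  · rw [mul_left_comm, ← pow_add]
    congr 2
    grind
  · rw [← mul_assoc, ← pow_add]
    congr 2
    grind

lemma qFactorial_succ (v : K) (k : ℕ) :
    qFactorial v (k + 1) = qFactorial v k * qInteger v (k + 1) :=
  prod_range_succ _ _

lemma qInteger_mul_inv_qFactorial {v : K} {k m : ℕ} (hm : qFactorial v m ≠ 0) (hk : k < m) :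
    qInteger v (k + 1) * (qFactorial v (k + 1))⁻¹ = (qFactorial v k)⁻¹ := by
  have hne : qInteger v (k + 1) ≠ 0 := prod_ne_zero_iff.mp hm k (mem_range.mpr hk)
  rw [qFactorial_succ, mul_inv, mul_left_comm, mul_inv_cancel₀ hne, mul_one]

/-- Pascal's rule for `q`-binomial coefficients, summed over a row against arbitrary vectors. -/
lemma qInteger_smul_sum_antidiagonal {M : Type*} [AddCommGroup M] [Module K M] {v : K}
    (hv : v ≠ 0) {m : ℕ} (hm : qFactorial v (m + 1) ≠ 0) (y : K) (T : ℕ → ℕ → M) :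
    qInteger v (m + 1) • ∑ p ∈ antidiagonal (m + 1),
        (y ^ p.1 * (qFactorial v p.1)⁻¹ * (qFactorial v p.2)⁻¹) • T p.1 p.2 =
      ∑ p ∈ antidiagonal m,
        ((y * v) ^ p.1 * (qFactorial v p.1)⁻¹ * (qFactorial v p.2)⁻¹) •
          (T p.1 (p.2 + 1) + (y * v⁻¹ ^ m) • T (p.1 + 1) p.2) := by
  let left (p : ℕ × ℕ) : M := (y ^ p.1 * v⁻¹ ^ p.2 *
    (qInteger v p.1 * (qFactorial v p.1)⁻¹) * (qFactorial v p.2)⁻¹) • T p.1 p.2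
  let right (p : ℕ × ℕ) : M := ((y * v) ^ p.1 * (qFactorial v p.1)⁻¹ *
    (qInteger v p.2 * (qFactorial v p.2)⁻¹)) • T p.1 p.2
  have hsplit : ∀ p ∈ antidiagonal (m + 1), qInteger v (m + 1) •
      (y ^ p.1 * (qFactorial v p.1)⁻¹ * (qFactorial v p.2)⁻¹) • T p.1 p.2 = left p + right p := by
    rintro ⟨k, l⟩ hp
    rw [← mem_antidiagonal.mp hp, qInteger_add, smul_smul, ← add_smul]
    congr 1
    ring
  have hleft_zero : left (0, m + 1) = 0 := by simp [left, qInteger_zero]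
  have hright_zero : right (m + 1, 0) = 0 := by simp [right, qInteger_zero]
  rw [smul_sum, sum_congr rfl hsplit, sum_add_distrib, Nat.sum_antidiagonal_succ (f := left),
    Nat.sum_antidiagonal_succ' (f := right), hleft_zero, hright_zero, zero_add, zero_add,
    ← sum_add_distrib]
  refine sum_congr rfl ?_
  rintro ⟨k, l⟩ hp
  obtain rfl : k + l = m := mem_antidiagonal.mp hp
  have hpow : v⁻¹ ^ (k + l) * v ^ k = v⁻¹ ^ l := by
    rw [pow_add, mul_right_comm, ← mul_pow, inv_mul_cancel₀ hv, one_pow, one_mul]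
  simp only [left, right]
  rw [qInteger_mul_inv_qFactorial hm (by omega), qInteger_mul_inv_qFactorial hm (by omega), ← hpow]
  module

variable {R : Type*} [Ring R] [Algebra K R]

theorem iterQCommutator_eq_qFactorial_smul_sum {v : K} (hv : v ≠ 0) (x : K) (a g : R) {m : ℕ}
    (hm : qFactorial v m ≠ 0) :
    iterQCommutator x (v⁻¹ ^ 2) a g m = qFactorial v m • ∑ p ∈ antidiagonal m,
      ((-(x * v * v⁻¹ ^ m)) ^ p.1 * (qFactorial v p.1)⁻¹ * (qFactorial v p.2)⁻¹) •
        (a ^ p.1 * g * a ^ p.2) := by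
  induction m with
  | zero => simp [iterQCommutator, qFactorial]
  | succ m ih =>
    have hm' : qFactorial v m ≠ 0 := left_ne_zero_of_mul (qFactorial_succ v m ▸ hm)
    have hvv : v * v⁻¹ = 1 := mul_inv_cancel₀ hv
    have hbase : -(x * v * v⁻¹ ^ (m + 1)) * v = -(x * v * v⁻¹ ^ m) := by
      linear_combination (-(x * v * v⁻¹ ^ m)) * hvv
    have hparam : -(x * v * v⁻¹ ^ (m + 1)) * v⁻¹ ^ m = -(x * (v⁻¹ ^ 2) ^ m) := by
      linear_combination (-(x * v⁻¹ ^ (2 * m))) * hvv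
    rw [qFactorial_succ, mul_smul, qInteger_smul_sum_antidiagonal hv hm _
      fun k l ↦ a ^ k * g * a ^ l, hbase, hparam, iterQCommutator, qCommutator, ih hm',
      smul_mul_assoc, mul_smul_comm, smul_comm (x * _), ← smul_sub, sum_mul, mul_sum, smul_sum,
      ← sum_sub_distrib]
    congr 1
    refine sum_congr rfl fun p _ ↦ ?_
    rw [smul_mul_assoc, mul_smul_comm, pow_succ a p.2, pow_succ' a p.1]
    simp only [mul_assoc]
    module

end QBinomial

section Serre

theorem IsSkewDerivationFamily.sum_qSerre_eq_zero {K U ι : Type*} [Field K] [Ring U] [Algebra K U]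
    [DecidableEq ι] {c : ι → ι → K} {f : ι → U} {E : ι → Module.End K U}
    (hE : IsSkewDerivationFamily c f E) (hf : Algebra.adjoin K (Set.range f) = ⊤) {i j : ι}
    (hij : i ≠ j) {v : K} (hv : v ≠ 0) {n : ℕ} (hfact : qFactorial v (n + 1) ≠ 0)
    (hii : c i i = v⁻¹ ^ 2) (hcij : c i j = v ^ n) (hcji : c j i = v ^ n) :
    ∑ k ∈ Finset.range (n + 2),
      ((-1 : K) ^ k * (qFactorial v k)⁻¹ * (qFactorial v (n + 1 - k))⁻¹) •
        (E i ^ k * E j * E i ^ (n + 1 - k)) = 0 := by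
  have hc : c i j * c j i * c i i ^ n = 1 := by
    rw [hcij, hcji, hii, ← pow_mul, inv_pow]
    field_simp
    ring
  have hbase : v ^ n * v * v⁻¹ ^ (n + 1) = 1 := by
    rw [← pow_succ, ← mul_pow, mul_inv_cancel₀ hv, one_pow]
  have hzero := hE.iterQCommutator_eq_zero hf hij hc
  rw [hcij, hii, iterQCommutator_eq_qFactorial_smul_sum hv _ _ _ hfact, hbase,
    Finset.Nat.sum_antidiagonal_eq_sum_range_succ_mk] at hzero
  exact (smul_eq_zero.mp hzero).resolve_left hfact

lemma IsCartan.diag_div_two_ne_zero {ι : Type} {A : ι → ι → ℤ} (hA : IsCartan A) (i : ι) :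
    A i i / 2 ≠ 0 := by
  have hpos := hA.2.1 i
  have heven := hA.2.2.1 i
  omega

lemma IsCartan.exists_serreN_eq {ι : Type} {A : ι → ι → ℤ} (hA : IsCartan A) {i j : ι}
    (hij : i ≠ j) :
    ∃ n : ℕ, serreN A i j = n + 1 ∧ A i j = -(A i i / 2 * n) := by
  obtain ⟨-, hpos, heven, hneg, hdvd⟩ := hA
  obtain ⟨d, hd⟩ := heven i
  obtain ⟨c, hc⟩ := hdvd i j
  have hii : A i i ≠ 0 := (hpos i).ne'
  have hc_nonpos : c ≤ 0 := by
    by_contra! hc_pos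
    have hprod : 0 < A i i * c := mul_pos (hpos i) hc_pos
    have hoff : A i j ≤ 0 := hneg i j hij
    omega
  refine ⟨(-c).toNat, ?_, ?_⟩
  · rw [serreN, hc, Int.mul_ediv_cancel_left _ hii]
    omega
  · rw [Int.toNat_of_nonneg (by omega)]
    rw [hd] at hc ⊢
    rw [Int.mul_ediv_cancel_left _ two_ne_zero]
    linarith

theorem stmt1_general {K U : Type*} [Field K] [Ring U] [Algebra K U] {q : K} (hq : q ≠ 0)
    {A : I → I → ℤ} (hA : IsCartan A) {f : I → U} (hf : Algebra.adjoin K (Set.range f) = ⊤)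
    {E : I → Module.End K U} (hE : IsSkewDerivationFamily (fun i j ↦ q ^ (-(A i j))) f E)
    {i j : I} (hij : i ≠ j) (hfact : qFactorial (q ^ (A i i / 2)) (serreN A i j) ≠ 0) :
    ∑ k ∈ Finset.range (serreN A i j + 1),
      ((-1 : K) ^ k * (qFactorial (q ^ (A i i / 2)) k)⁻¹ *
          (qFactorial (q ^ (A i i / 2)) (serreN A i j - k))⁻¹) •
        (E i ^ k * E j * E i ^ (serreN A i j - k)) = 0 := by
  obtain ⟨n, hb, hn⟩ := hA.exists_serreN_eq hij
  have hii : q ^ (-(A i i)) = (q ^ (A i i / 2))⁻¹ ^ 2 := by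
    rw [inv_pow, ← zpow_natCast, ← zpow_mul, ← zpow_neg]
    congr 2
    exact (Int.ediv_mul_cancel (hA.2.2.1 i)).symm
  have hqij : q ^ (-(A i j)) = (q ^ (A i i / 2)) ^ n := by
    rw [hn, neg_neg, zpow_mul, zpow_natCast]
  rw [hb] at hfact ⊢
  exact hE.sum_qSerre_eq_zero hf hij (zpow_ne_zero _ hq) hfact hii hqij (hA.1 i j ▸ hqij)

end Serre

section RationalFunctions

lemma ratFunc_intDegree_X_zpow {F : Type*} [Field F] (n : ℤ) :
    ((RatFunc.X : RatFunc F) ^ n).intDegree = n := by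
  have hX : (RatFunc.X : RatFunc F) ≠ 0 := RatFunc.X_ne_zero
  induction n using Int.induction_on with
  | zero => simp
  | succ n ih =>
    rw [zpow_add_one₀ hX, RatFunc.intDegree_mul (zpow_ne_zero _ hX) hX, ih, RatFunc.intDegree_X]
  | pred n ih =>
    rw [zpow_sub_one₀ hX, RatFunc.intDegree_mul (zpow_ne_zero _ hX) (inv_ne_zero hX), ih,
      RatFunc.intDegree_inv, RatFunc.intDegree_X, sub_eq_add_neg]

lemma qq_zpow_sub_qq_zpow_neg_ne_zero {n : ℤ} (hn : n ≠ 0) : qq ^ n - qq ^ (-n) ≠ 0 := by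
  intro h
  have hdeg := congrArg RatFunc.intDegree (sub_eq_zero.mp h)
  rw [qq, ratFunc_intDegree_X_zpow, ratFunc_intDegree_X_zpow] at hdeg
  omega

lemma qInt_eq_qInteger {d : ℤ} (hd : d ≠ 0) (k : ℕ) : qInt d k = qInteger (qq ^ d) k := by
  rw [qInt, div_eq_iff (qq_zpow_sub_qq_zpow_neg_ne_zero hd), zpow_neg qq d, qInteger,
    geom_sum₂_mul, zpow_neg, zpow_mul, zpow_natCast, inv_pow]

lemma qInt_ne_zero {d : ℤ} (hd : d ≠ 0) {k : ℕ} (hk : k ≠ 0) : qInt d k ≠ 0 :=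
  div_ne_zero (qq_zpow_sub_qq_zpow_neg_ne_zero (mul_ne_zero hd (Nat.cast_ne_zero.mpr hk)))
    (qq_zpow_sub_qq_zpow_neg_ne_zero hd)

lemma qFact_ne_zero {d : ℤ} (hd : d ≠ 0) (k : ℕ) : qFact d k ≠ 0 :=
  Finset.prod_ne_zero_iff.mpr fun m _ ↦ qInt_ne_zero hd m.succ_ne_zero

lemma qFact_eq_qFactorial {d : ℤ} (hd : d ≠ 0) (k : ℕ) : qFact d k = qFactorial (qq ^ d) k :=
  Finset.prod_congr rfl fun m _ ↦ qInt_eq_qInteger hd (m + 1)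

lemma adjoin_range_fgen {ι : Type} (A : ι → ι → ℤ) :
    Algebra.adjoin KK (Set.range (fgen A)) = ⊤ := by
  have hrange : Set.range (fgen A) =
      RingQuot.mkAlgHom KK (SerreRel A) '' Set.range (FreeAlgebra.ι KK) :=
    Set.range_comp (RingQuot.mkAlgHom KK (SerreRel A)) (FreeAlgebra.ι KK)
  rw [hrange, ← AlgHom.map_adjoin, FreeAlgebra.adjoin_range_ι, Algebra.map_top,
    AlgHom.range_eq_top]
  exact RingQuot.mkAlgHom_surjective KK (SerreRel A)

end RationalFunctions

theorem stmt1 (A : I → I → ℤ) (hA : IsCartan A)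
    (E : I → Module.End KK (Um A)) (hE : EprimRel A E) :
    ∀ i j : I, i ≠ j →
      ∑ k ∈ Finset.range (serreN A i j + 1),
        ((-1 : KK) ^ k * (qFact (A i i / 2) k)⁻¹ * (qFact (A i i / 2) (serreN A i j - k))⁻¹) •
          ((E i) ^ k * E j * (E i) ^ (serreN A i j - k)) = 0 := by
  intro i j hij
  have hd := hA.diag_div_two_ne_zero i
  simpa only [qFact_eq_qFactorial hd] using stmt1_general RatFunc.X_ne_zero hA
    (adjoin_range_fgen A) ⟨hE.1, hE.2⟩ hij (qFact_eq_qFactorial hd _ ▸ qFact_ne_zero hd _)
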